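/- Let n be an odd positive integer and p ∈ [0,1]. Then the difference of majority-cheating probabilities satisfies the exact identity P_C(n+2,p) − P_C(n,p) = C(n,(n+1)/2) · (p(1-p))^{(n+1)/2} · (2p − 1). -/

import Mathlib

/-- The probability that a strict majority of `n` independent workers cheat,
when each cheats independently with probability `p`. -/
noncomputable def majProb (n : ℕ) (p : ℝ) : ℝ :=
  ∑ k ∈ Finset.Icc ((n + 1) / 2) n, (n.choose k : ℝ) * p ^ k * (1 - p) ^ (n - k)

/-!
Let two more workers join `n = 2 * m + 1` workers. The majority threshold rises from `m + 1` to
`m + 2` cheaters, so the outcome changes only if there were `m` cheaters and both newcomers cheat,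
or `m + 1` cheaters and both newcomers are honest. Hence the difference is
`p ^ 2 * b m - (1 - p) ^ 2 * b (m + 1)`, where `b k` is the probability of exactly `k` cheaters
among `n`, and the two terms share the factor `n.choose (m + 1) * (p * (1 - p)) ^ (m + 1)`.
-/

open Polynomial

section BernsteinTail

variable (R : Type*) [CommRing R]

/-- The upper tail of the binomial distribution as a polynomial in the success probability: its
value at `p` is the probability of at least `a` successes in `n` independent trials. -/
noncomputable def bernsteinTail (n a : ℕ) : R[X] :=
  ∑ k ∈ Finset.Icc a n, bernsteinPolynomial R n k

lemma bernsteinPolynomial_succ_succ (n k : ℕ) :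
    bernsteinPolynomial R (n + 1) (k + 1) =
      X * bernsteinPolynomial R n k + (1 - X) * bernsteinPolynomial R n (k + 1) := by
  simp only [bernsteinPolynomial, Nat.choose_succ_succ, Nat.add_sub_add_right, Nat.cast_add]
  rcases lt_or_ge k n with hk | hk
  · rw [← Nat.sub_add_cancel (Nat.sub_pos_of_lt hk), Nat.sub_sub]
    ring
  · rw [Nat.choose_eq_zero_of_lt (Nat.lt_succ_of_le hk)]
    ring

lemma bernsteinTail_eq_add_succ (n a : ℕ) :
    bernsteinTail R n a = bernsteinPolynomial R n a + bernsteinTail R n (a + 1) := by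
  rcases le_or_gt a n with ha | ha
  · rw [bernsteinTail, bernsteinTail, Finset.Icc_add_one_left_eq_Ioc,
      Finset.add_sum_Ioc_eq_sum_Icc ha]
  · simp [bernsteinTail, bernsteinPolynomial.eq_zero_of_lt R ha, ha, Nat.lt_succ_of_lt ha]

lemma bernsteinTail_succ_succ (n a : ℕ) :
    bernsteinTail R (n + 1) (a + 1) =
      X * bernsteinTail R n a + (1 - X) * bernsteinTail R n (a + 1) := by
  have shift (f : ℕ → R[X]) :
      ∑ k ∈ Finset.Icc (a + 1) (n + 1), f k = ∑ k ∈ Finset.Icc a n, f (k + 1) := by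
    rw [← Finset.map_add_right_Icc, Finset.sum_map]
    rfl
  have top : ∑ k ∈ Finset.Icc a n, bernsteinPolynomial R n (k + 1) = bernsteinTail R n (a + 1) := by
    rw [← shift (bernsteinPolynomial R n)]
    refine (Finset.sum_subset (Finset.Icc_subset_Icc_right n.le_succ) fun k _ hk => ?_).symm
    exact bernsteinPolynomial.eq_zero_of_lt R (by grind)
  simp only [bernsteinTail, shift, bernsteinPolynomial_succ_succ, Finset.sum_add_distrib,
    ← Finset.mul_sum, top]

theorem bernsteinTail_add_two_sub (n a : ℕ) :
    bernsteinTail R (n + 2) (a + 2) - bernsteinTail R n (a + 1) =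
      X ^ 2 * bernsteinPolynomial R n a - (1 - X) ^ 2 * bernsteinPolynomial R n (a + 1) := by
  rw [bernsteinTail_succ_succ, bernsteinTail_succ_succ, bernsteinTail_succ_succ,
    bernsteinTail_eq_add_succ R n a, bernsteinTail_eq_add_succ R n (a + 1)]
  ring

theorem majProb_add_two_sub_general {n : ℕ} (hn : Odd n) :
    bernsteinTail R (n + 2) ((n + 2 + 1) / 2) - bernsteinTail R n ((n + 1) / 2) =
      (n.choose ((n + 1) / 2) : R[X]) * (X * (1 - X)) ^ ((n + 1) / 2) * (2 * X - 1) := by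
  obtain ⟨m, rfl⟩ := hn
  have threshold : (2 * m + 1 + 1) / 2 = m + 1 := by omega
  have threshold_add_two : (2 * m + 1 + 2 + 1) / 2 = m + 2 := by omega
  have below : bernsteinPolynomial R (2 * m + 1) m =
      ((2 * m + 1).choose (m + 1) : R[X]) * X ^ m * (1 - X) ^ (m + 1) := by
    rw [bernsteinPolynomial, Nat.choose_symm_half, show 2 * m + 1 - m = m + 1 by omega]
  have above : bernsteinPolynomial R (2 * m + 1) (m + 1) =
      ((2 * m + 1).choose (m + 1) : R[X]) * X ^ (m + 1) * (1 - X) ^ m := by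
    rw [bernsteinPolynomial, show 2 * m + 1 - (m + 1) = m by omega]
  rw [threshold, threshold_add_two, bernsteinTail_add_two_sub, below, above, mul_pow]
  ring

end BernsteinTail

lemma majProb_eq_eval_bernsteinTail (n : ℕ) (p : ℝ) :
    majProb n p = (bernsteinTail ℝ n ((n + 1) / 2)).eval p := by
  simp [majProb, bernsteinTail, bernsteinPolynomial, eval_finsetSum]

theorem majProb_add_two_sub (n : ℕ) (hn : Odd n) (hpos : 0 < n)
    (p : ℝ) (hp0 : 0 ≤ p) (hp1 : p ≤ 1) :
    majProb (n + 2) p - majProb n p =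
      (n.choose ((n + 1) / 2) : ℝ) * (p * (1 - p)) ^ ((n + 1) / 2) * (2 * p - 1) := by
  simpa [majProb_eq_eval_bernsteinTail] using
    congrArg (eval p) (majProb_add_two_sub_general ℝ hn)
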